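/- Let Γ be a finitely generated virtually abelian group and let μ be a probability measure on Γ with finite second moment whose support generates Γ as a semigroup. If there exists a nonzero group homomorphism from Γ to ℤ, then the limit, as ρ tends to 0 with ρ ∈ (0,1], of liminf_{n→∞} ‖π^ρ_n − μ_n×μ_n‖_TV equals 1; in particular, it is not the case that for every ρ ∈ (0,1], ‖π^ρ_n − μ_n×μ_n‖_TV → 0 as n → ∞. -/

import Mathlib

open scoped BigOperators Classical
open Filter Matrix MeasureTheory

namespace NSVA

noncomputable section

/-- Convolution of two real-valued functions on a group. -/
def conv {G : Type*} [Group G] (μ ν : G → ℝ) : G → ℝ :=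
  fun g => ∑' h : G, μ h * ν (h⁻¹ * g)

/-- Convolution powers: `convPow μ 0 = δ_1`, `convPow μ (n+1) = (convPow μ n) * μ`. -/
def convPow {G : Type*} [Group G] (μ : G → ℝ) : ℕ → G → ℝ
  | 0 => fun g => if g = 1 then 1 else 0
  | n + 1 => conv (convPow μ n) μ

/-- A probability measure on a countable set, viewed as a function. -/
def IsProb {G : Type*} (μ : G → ℝ) : Prop := (∀ g, 0 ≤ μ g) ∧ HasSum μ 1

/-- The support of `μ` generates the group as a semigroup. -/
def Nondeg {G : Type*} [Group G] (μ : G → ℝ) : Prop :=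
  ∀ g : G, g ∈ Subsemigroup.closure {x : G | 0 < μ x}

/-- `μ` is aperiodic: `μ_n(1) > 0` for all large enough `n`. -/
def Aperiodic {G : Type*} [Group G] (μ : G → ℝ) : Prop :=
  ∃ N : ℕ, ∀ n : ℕ, N ≤ n → 0 < convPow μ n 1

/-- Total variation distance between two (probability) functions. -/
def tv {Z : Type*} (p q : Z → ℝ) : ℝ := (1 / 2) * ∑' z : Z, |p z - q z|

/-- Word length with respect to a finite set `S₀`. -/
def wordLength {G : Type*} [Group G] (S₀ : Finset G) (g : G) : ℕ :=
  sInf {n : ℕ | ∃ l : List G, (∀ s ∈ l, s ∈ S₀) ∧ l.length = n ∧ l.prod = g}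

/-- Finite second moment with respect to a word metric given by a finite symmetric
generating set. -/
def FinSecondMoment {G : Type*} [Group G] (μ : G → ℝ) : Prop :=
  ∃ S₀ : Finset G, (∀ s ∈ S₀, s⁻¹ ∈ S₀) ∧ Subgroup.closure (S₀ : Set G) = ⊤ ∧
    Summable (fun g : G => (wordLength S₀ g : ℝ) ^ 2 * μ g)

/-- A group is virtually abelian if it has an abelian subgroup of finite index. -/
def VirtAbelian (G : Type*) [Group G] : Prop :=
  ∃ A : Subgroup G, A.index ≠ 0 ∧ ∀ a b : A, a * b = b * a

/-- The noised measure `π^ρ` on `G × G`. -/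
def noised {G : Type*} (μ : G → ℝ) (ρ : ℝ) : G × G → ℝ :=
  fun p => ρ * μ p.1 * μ p.2 + (1 - ρ) * μ p.1 * (if p.1 = p.2 then 1 else 0)

/-- First marginal of a measure on a product. -/
def marg1 {G₁ G₂ : Type*} (ν : G₁ × G₂ → ℝ) : G₁ → ℝ := fun γ₁ => ∑' γ₂ : G₂, ν (γ₁, γ₂)

/-- Second marginal of a measure on a product. -/
def marg2 {G₁ G₂ : Type*} (ν : G₁ × G₂ → ℝ) : G₂ → ℝ := fun γ₂ => ∑' γ₁ : G₁, ν (γ₁, γ₂)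

/-- A system of representatives of the right cosets `Λ\Γ` containing the identity,
together with the representative map `rep`, constant on right cosets. -/
structure RepSystem {Γ : Type*} [Group Γ] (Λ : Subgroup Γ) where
  Δ : Finset Γ
  one_mem : (1 : Γ) ∈ Δ
  rep : Γ → Γ
  rep_mem : ∀ γ : Γ, rep γ ∈ Δ
  rep_spec : ∀ γ : Γ, γ * (rep γ)⁻¹ ∈ Λ
  rep_idem : ∀ x ∈ Δ, rep x = x
  rep_coset : ∀ γ : Γ, ∀ v ∈ Λ, rep (v * γ) = rep γ

variable {Γ : Type*} [Group Γ] {Λ : Subgroup Γ} {m : ℕ}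

/-- The cocycle `α(x,s) = ψ(x·s·(x^s)⁻¹) ∈ ℤ^m`. -/
def cocycle (ψ : Λ ≃* Multiplicative (Fin m → ℤ)) (R : RepSystem Λ) (x s : Γ) : Fin m → ℤ :=
  Multiplicative.toAdd (ψ ⟨x * s * (R.rep (x * s))⁻¹, R.rep_spec (x * s)⟩)

/-- The transfer homomorphism `θ(γ) = ∑_{x∈Δ} α(x,γ)`. -/
def transfer (ψ : Λ ≃* Multiplicative (Fin m → ℤ)) (R : RepSystem Λ) (γ : Γ) : Fin m → ℤ :=
  ∑ x ∈ R.Δ, cocycle ψ R x γ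

/-- `Φ(γ) = ψ(v)` where `γ = v·x`, `v ∈ Λ`, `x ∈ Δ`. -/
def Phi (ψ : Λ ≃* Multiplicative (Fin m → ℤ)) (R : RepSystem Λ) (γ : Γ) : Fin m → ℤ :=
  Multiplicative.toAdd (ψ ⟨γ * (R.rep γ)⁻¹, R.rep_spec γ⟩)

/-- A 1-form on the quotient diagram. -/
def IsOneForm (R : RepSystem Λ) (ω : Γ → Γ → ℝ) : Prop :=
  ∀ x ∈ R.Δ, ∀ s : Γ, ω (R.rep (x * s)) s⁻¹ = -ω x s

/-- `χ(ω) = ∑_{x∈Δ} ∑_s c(x,s)·ω(x,s)` where `c(x,s) = μ(s)/#F`. -/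
def chi (R : RepSystem Λ) (μ : Γ → ℝ) (ω : Γ → Γ → ℝ) : ℝ :=
  ∑ x ∈ R.Δ, ∑' s : Γ, μ s / (Λ.index : ℝ) * ω x s

/-- Square-integrability of a 1-form. -/
def SqInt (R : RepSystem Λ) (μ : Γ → ℝ) (ω : Γ → Γ → ℝ) : Prop :=
  ∀ x ∈ R.Δ, Summable (fun s : Γ => μ s / (Λ.index : ℝ) * ω x s ^ 2)

/-- Harmonicity of a (square-integrable) 1-form. -/
def Harmonic (R : RepSystem Λ) (μ : Γ → ℝ) (ω : Γ → Γ → ℝ) : Prop :=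
  SqInt R μ ω ∧ ∀ x ∈ R.Δ, (∑' s : Γ, μ s * ω x s) = chi R μ ω

/-- The differential `df(x,s) = f(x^s) − f(x)`. -/
def dd (R : RepSystem Λ) (f : Γ → ℝ) : Γ → Γ → ℝ := fun x s => f (R.rep (x * s)) - f x

/-- `(u, f)` is a harmonic decomposition of the 1-form `ω`: `ω = u + df` with `u`
a harmonic 1-form. -/
def IsHarmDecomp (R : RepSystem Λ) (μ : Γ → ℝ) (ω u : Γ → Γ → ℝ) (f : Γ → ℝ) : Prop :=
  IsOneForm R u ∧ Harmonic R μ u ∧ ∀ x ∈ R.Δ, ∀ s : Γ, ω x s = u x s + dd R f x s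

/-- The 1-form `v̂(x,s) = ⟨v, α(x,s)⟩` (standard inner product). -/
def vhat (ψ : Λ ≃* Multiplicative (Fin m → ℤ)) (R : RepSystem Λ) (v : Fin m → ℝ) :
    Γ → Γ → ℝ :=
  fun x s => ∑ i, v i * (cocycle ψ R x s i : ℝ)

/-- The 1-form `v̂(x,s) = B(v, α(x,s))` for a bilinear form `B`. -/
def vhatB (ψ : Λ ≃* Multiplicative (Fin m → ℤ)) (R : RepSystem Λ)
    (B : (Fin m → ℝ) →ₗ[ℝ] (Fin m → ℝ) →ₗ[ℝ] ℝ) (v : Fin m → ℝ) : Γ → Γ → ℝ :=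
  fun x s => B v (fun i => (cocycle ψ R x s i : ℝ))

/-- The drift `ζ = (1/#F)·∑_{x∈Δ}∑_s μ(s)·α(x,s) ∈ ℝ^m`. -/
def drift (ψ : Λ ≃* Multiplicative (Fin m → ℤ)) (R : RepSystem Λ) (μ : Γ → ℝ) : Fin m → ℝ :=
  fun i => (Λ.index : ℝ)⁻¹ * ∑ x ∈ R.Δ, ∑' s : Γ, μ s * (cocycle ψ R x s i : ℝ)

/-- The covariance pairing `∑_{x,s} c(x,s)·u(x,s)·u'(x,s) − χ(u)·χ(u')`. -/
def cov (R : RepSystem Λ) (μ : Γ → ℝ) (u u' : Γ → Γ → ℝ) : ℝ :=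
  (∑ x ∈ R.Δ, ∑' s : Γ, μ s / (Λ.index : ℝ) * (u x s * u' x s)) - chi R μ u * chi R μ u'

/-- The transfer operator `ℒ_v` acting on functions `Δ → ℂ`. -/
def transferOp (ψ : Λ ≃* Multiplicative (Fin m → ℤ)) (R : RepSystem Λ) (μ : Γ → ℝ)
    (v : Fin m → ℝ) (f : Γ → ℂ) : Γ → ℂ :=
  fun x => ∑' s : Γ, (μ s : ℂ) *
    Complex.exp (2 * Real.pi * Complex.I * ((∑ i, v i * (cocycle ψ R x s i : ℝ)) : ℝ)) *
    f (R.rep (x * s))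

/-- The Gaussian density `ξ_A(w)` associated with a (positive-definite) matrix `A`. -/
def gauss {d : ℕ} (A : Matrix (Fin d) (Fin d) ℝ) (w : Fin d → ℝ) : ℝ :=
  (2 * Real.pi) ^ (-(d : ℝ) / 2) * A.det ^ (-(1 : ℝ) / 2) *
    Real.exp (-(w ⬝ᵥ A⁻¹.mulVec w) / 2)

/-- The product representative system for `Λ₁ × Λ₂ ≤ Γ₁ × Γ₂`. -/
def prodRep {Γ₁ : Type*} [Group Γ₁] {Γ₂ : Type*} [Group Γ₂]
    {Λ₁ : Subgroup Γ₁} {Λ₂ : Subgroup Γ₂}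
    (R₁ : RepSystem Λ₁) (R₂ : RepSystem Λ₂) : RepSystem (Λ₁.prod Λ₂) where
  Δ := R₁.Δ ×ˢ R₂.Δ
  one_mem := Finset.mem_product.mpr ⟨R₁.one_mem, R₂.one_mem⟩
  rep := fun p => (R₁.rep p.1, R₂.rep p.2)
  rep_mem := fun p => Finset.mem_product.mpr ⟨R₁.rep_mem p.1, R₂.rep_mem p.2⟩
  rep_spec := fun p => Subgroup.mem_prod.mpr ⟨R₁.rep_spec p.1, R₂.rep_spec p.2⟩
  rep_idem := fun x hx => by
    rcases Finset.mem_product.mp hx with ⟨h1, h2⟩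
    exact Prod.ext_iff.mpr ⟨R₁.rep_idem x.1 h1, R₂.rep_idem x.2 h2⟩
  rep_coset := fun p v hv => by
    rcases Subgroup.mem_prod.mp hv with ⟨h1, h2⟩
    exact Prod.ext_iff.mpr ⟨R₁.rep_coset p.1 v.1 h1, R₂.rep_coset p.2 v.2 h2⟩

/-- The 1-form `𝐯̂(x,s) = ⟨𝐯, α(x,s)⟩` on a product, standard inner product. -/
def vhat2 {Γ₁ : Type*} [Group Γ₁] {Γ₂ : Type*} [Group Γ₂]
    {Λ₁ : Subgroup Γ₁} {Λ₂ : Subgroup Γ₂} {m₁ m₂ : ℕ}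
    (ψ₁ : Λ₁ ≃* Multiplicative (Fin m₁ → ℤ)) (R₁ : RepSystem Λ₁)
    (ψ₂ : Λ₂ ≃* Multiplicative (Fin m₂ → ℤ)) (R₂ : RepSystem Λ₂)
    (v : (Fin m₁ → ℝ) × (Fin m₂ → ℝ)) : (Γ₁ × Γ₂) → (Γ₁ × Γ₂) → ℝ :=
  fun x s => (∑ i, v.1 i * (cocycle ψ₁ R₁ x.1 s.1 i : ℝ)) +
    ∑ i, v.2 i * (cocycle ψ₂ R₂ x.2 s.2 i : ℝ)

/-- The 1-form `𝐯̂(x,s) = ⟨𝐯, α(x,s)⟩` on a product, orthogonal-sum of the two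
bilinear forms `B₁`, `B₂`. -/
def vhatB2 {Γ₁ : Type*} [Group Γ₁] {Γ₂ : Type*} [Group Γ₂]
    {Λ₁ : Subgroup Γ₁} {Λ₂ : Subgroup Γ₂} {m₁ m₂ : ℕ}
    (ψ₁ : Λ₁ ≃* Multiplicative (Fin m₁ → ℤ)) (R₁ : RepSystem Λ₁)
    (B₁ : (Fin m₁ → ℝ) →ₗ[ℝ] (Fin m₁ → ℝ) →ₗ[ℝ] ℝ)
    (ψ₂ : Λ₂ ≃* Multiplicative (Fin m₂ → ℤ)) (R₂ : RepSystem Λ₂)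
    (B₂ : (Fin m₂ → ℝ) →ₗ[ℝ] (Fin m₂ → ℝ) →ₗ[ℝ] ℝ)
    (v : (Fin m₁ → ℝ) × (Fin m₂ → ℝ)) : (Γ₁ × Γ₂) → (Γ₁ × Γ₂) → ℝ :=
  fun x s => B₁ v.1 (fun i => (cocycle ψ₁ R₁ x.1 s.1 i : ℝ)) +
    B₂ v.2 (fun i => (cocycle ψ₂ R₂ x.2 s.2 i : ℝ))

end

noncomputable section

section CharacterSums

theorem hasSum_of_eq {ι E : Type*} [AddCommMonoid E] [TopologicalSpace E] {f g : ι → E} {a b : E}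
    (h : HasSum f a) (hfg : ∀ i, g i = f i) (hab : b = a) : HasSum g b := by
  rwa [funext hfg, hab]

theorem hasSum_mul_prod {ι κ : Type*} {f : ι → ℂ} {g : κ → ℂ} {a b : ℂ}
    (ha : HasSum f a) (hb : HasSum g b) (hf : Summable fun x => ‖f x‖)
    (hg : Summable fun x => ‖g x‖) : HasSum (fun x : ι × κ => f x.1 * g x.2) (a * b) :=
  ha.mul hb (summable_mul_of_summable_norm hf hg)

variable {G : Type*}

theorem IsProb.summable_mul_of_norm_le_one {p : G → ℝ} (hp : IsProb p) {f : G → ℂ}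
    (hf : ∀ g, ‖f g‖ ≤ 1) : Summable (fun g => ‖(p g : ℂ) * f g‖) := by
  refine Summable.of_nonneg_of_le (fun _ => norm_nonneg _) (fun g => ?_) hp.2.summable
  rw [norm_mul, Complex.norm_of_nonneg (hp.1 g)]
  exact mul_le_of_le_one_right (hp.1 g) (hf g)

theorem IsProb.hasSum_prod {μ : G → ℝ} (hμ : IsProb μ) :
    HasSum (fun p : G × G => μ p.1 * μ p.2) 1 := by
  have := hμ.2.mul hμ.2 (hμ.2.summable.mul_of_nonneg hμ.2.summable hμ.1 hμ.1)
  simpa using this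

theorem hasSum_diag {E : Type*} [AddCommMonoid E] [TopologicalSpace E] {f : G × G → E} {a : E}
    (h : HasSum (fun g => f (g, g)) a) :
    HasSum (fun p : G × G => if p.1 = p.2 then f p else 0) a := by
  have hi : Function.Injective (fun g : G => (g, g)) := fun a b hab => (Prod.ext_iff.mp hab).1
  rw [← hi.hasSum_iff]
  · simpa [Function.comp_def] using h
  · rintro ⟨a, b⟩ hp
    have : a ≠ b := fun hab => hp ⟨a, by simp [hab]⟩
    simp [this]

theorem IsProb.noised {μ : G → ℝ} (hμ : IsProb μ) {ρ : ℝ} (h0 : 0 ≤ ρ) (h1 : ρ ≤ 1) :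
    IsProb (noised μ ρ) := by
  constructor
  · intro p
    have := mul_nonneg (mul_nonneg h0 (hμ.1 p.1)) (hμ.1 p.2)
    have := mul_nonneg (sub_nonneg.mpr h1) (hμ.1 p.1)
    simp only [NSVA.noised]
    split_ifs <;> linarith
  · have h2 : HasSum (fun p : G × G => if p.1 = p.2 then μ p.1 else 0) 1 :=
      hasSum_diag (f := fun p : G × G => μ p.1) hμ.2
    refine hasSum_of_eq ((hμ.hasSum_prod.mul_left ρ).add (h2.mul_left (1 - ρ)))
      (fun p => ?_) ?_
    · simp only [NSVA.noised]
      split_ifs <;> ring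
    · ring

theorem noised_one (μ : G → ℝ) : noised μ 1 = fun p : G × G => μ p.1 * μ p.2 := by
  funext p
  simp [noised]

variable [Group G]

theorem IsProb.summable_conv_term {p q : G → ℝ} (hp : IsProb p) (hq : IsProb q) (g : G) :
    Summable (fun h => p h * q (h⁻¹ * g)) :=
  Summable.of_nonneg_of_le (fun h => mul_nonneg (hp.1 h) (hq.1 _))
    (fun h => mul_le_of_le_one_right (hp.1 h) (le_hasSum hq.2 _ fun g _ => hq.1 g))
    hp.2.summable

theorem hasSum_conv_mul_char {p q : G → ℝ} (hp : IsProb p) (hq : IsProb q) (χ : G →* ℂ)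
    (hχ : ∀ g, ‖χ g‖ = 1) {a b : ℂ} (ha : HasSum (fun g => (p g : ℂ) * χ g) a)
    (hb : HasSum (fun g => (q g : ℂ) * χ g) b) :
    HasSum (fun g => (conv p q g : ℂ) * χ g) (a * b) := by
  have hs := hasSum_mul_prod ha hb
    (hp.summable_mul_of_norm_le_one (fun g => (hχ g).le))
    (hq.summable_mul_of_norm_le_one (fun g => (hχ g).le))
  let e : G × G ≃ G × G :=
    { toFun := fun x => (x.2, x.2⁻¹ * x.1)
      invFun := fun x => (x.1 * x.2, x.1)
      left_inv := fun x => by simp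
      right_inv := fun x => by simp }
  have h2 := e.hasSum_iff.mpr hs
  have h3 : HasSum (fun x : G × G => ((p x.2 * q (x.2⁻¹ * x.1) : ℝ) : ℂ) * χ x.1) (a * b) := by
    refine hasSum_of_eq h2 (fun x => ?_) rfl
    have : χ x.1 = χ x.2 * χ (x.2⁻¹ * x.1) := by rw [← map_mul]; simp
    simp only [Function.comp, e, Equiv.coe_fn_mk, this]
    push_cast
    ring
  have h4 (g : G) : HasSum (fun h => ((p h * q (h⁻¹ * g) : ℝ) : ℂ) * χ g)
      ((conv p q g : ℂ) * χ g) :=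
    (Complex.hasSum_ofReal.mpr (hp.summable_conv_term hq g).hasSum).mul_right _
  exact h3.prod_fiberwise h4

theorem IsProb.conv {p q : G → ℝ} (hp : IsProb p) (hq : IsProb q) : IsProb (conv p q) := by
  refine ⟨fun g => tsum_nonneg fun h => mul_nonneg (hp.1 h) (hq.1 _), ?_⟩
  have h1 {r : G → ℝ} (hr : HasSum r 1) :
      HasSum (fun g => (r g : ℂ) * (1 : G →* ℂ) g) 1 := by
    simpa using Complex.hasSum_ofReal.mpr hr
  have := hasSum_conv_mul_char hp hq 1 (by simp) (h1 hp.2) (h1 hq.2)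
  rw [← Complex.hasSum_ofReal]
  simpa using this

theorem IsProb.convPow {p : G → ℝ} (hp : IsProb p) (n : ℕ) : IsProb (convPow p n) := by
  induction n with
  | zero =>
    refine ⟨fun g => ?_, hasSum_ite_eq 1 1⟩
    simp only [NSVA.convPow]
    split_ifs <;> norm_num
  | succ n ih => exact ih.conv hp

theorem hasSum_convPow_mul_char {p : G → ℝ} (hp : IsProb p) (χ : G →* ℂ)
    (hχ : ∀ g, ‖χ g‖ = 1) {a : ℂ} (ha : HasSum (fun g => (p g : ℂ) * χ g) a) (n : ℕ) :
    HasSum (fun g => (convPow p n g : ℂ) * χ g) (a ^ n) := by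
  induction n with
  | zero =>
    rw [pow_zero]
    convert hasSum_ite_eq (1 : G) (1 : ℂ) using 2 with g
    simp only [convPow]
    split_ifs with h <;> simp [h]
  | succ n ih =>
    rw [pow_succ]
    exact hasSum_conv_mul_char (hp.convPow n) hp χ hχ ih ha

theorem convPow_prod {μ : G → ℝ} (hμ : IsProb μ) (n : ℕ) :
    convPow (fun p : G × G => μ p.1 * μ p.2) n =
      fun p => convPow μ n p.1 * convPow μ n p.2 := by
  induction n with
  | zero =>
    funext p
    simp only [convPow, Prod.ext_iff, Prod.fst_one, Prod.snd_one]
    split_ifs <;> simp_all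
  | succ n ih =>
    funext p
    simp only [convPow, ih, conv]
    rw [tsum_mul_tsum_of_summable_norm
      ((hμ.convPow n).summable_conv_term hμ p.1).norm
      ((hμ.convPow n).summable_conv_term hμ p.2).norm]
    refine tsum_congr fun x => ?_
    simp only [Prod.fst_mul, Prod.snd_mul, Prod.fst_inv, Prod.snd_inv]
    ring

/-- The character `g ↦ exp(i·u·Φ(g))` attached to an integer-valued homomorphism `Φ`. -/
def intChar (Φ : G →* Multiplicative ℤ) (u : ℝ) : G →* ℂ where
  toFun g := Complex.exp ((u * ((Multiplicative.toAdd (Φ g) : ℤ) : ℝ) : ℝ) * Complex.I)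
  map_one' := by simp
  map_mul' g h := by
    rw [← Complex.exp_add, map_mul, toAdd_mul]
    push_cast
    ring_nf

theorem norm_intChar (Φ : G →* Multiplicative ℤ) (u : ℝ) (g : G) : ‖intChar Φ u g‖ = 1 :=
  Complex.norm_exp_ofReal_mul_I _

theorem intChar_re (Φ : G →* Multiplicative ℤ) (u : ℝ) (g : G) :
    (intChar Φ u g).re = Real.cos (u * ((Multiplicative.toAdd (Φ g) : ℤ) : ℝ)) :=
  Complex.exp_ofReal_mul_I_re _

/-- The homomorphism `(γ, γ') ↦ φ(γ) − φ(γ')` on `G × G`. -/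
def diffHom (φ : G →* Multiplicative ℤ) : G × G →* Multiplicative ℤ :=
  φ.comp (MonoidHom.fst G G) / φ.comp (MonoidHom.snd G G)

theorem toAdd_diffHom (φ : G →* Multiplicative ℤ) (p : G × G) :
    Multiplicative.toAdd (diffHom φ p) =
      Multiplicative.toAdd (φ p.1) - Multiplicative.toAdd (φ p.2) := rfl

theorem intChar_diffHom (φ : G →* Multiplicative ℤ) (u : ℝ) (p : G × G) :
    intChar (diffHom φ) u p = intChar φ u p.1 * (starRingEnd ℂ) (intChar φ u p.2) := by
  simp only [intChar, MonoidHom.coe_mk, OneHom.coe_mk, toAdd_diffHom]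
  rw [← Complex.exp_conj, ← Complex.exp_add]
  simp only [map_mul, Complex.conj_ofReal, Complex.conj_I]
  push_cast
  ring_nf

/-- The quantity `1 − |μ̂(u)|²`, where `μ̂` is the characteristic function of `φ_* μ`. -/
def charDefect (φ : G →* Multiplicative ℤ) (μ : G → ℝ) (u : ℝ) : ℝ :=
  1 - Complex.normSq (∑' g, (μ g : ℂ) * intChar φ u g)

theorem hasSum_prod_mul_char {μ : G → ℝ} (hμ : IsProb μ) (φ : G →* Multiplicative ℤ) (u : ℝ) :
    HasSum (fun p : G × G => ((μ p.1 * μ p.2 : ℝ) : ℂ) * intChar (diffHom φ) u p)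
      ((1 - charDefect φ μ u : ℝ) : ℂ) := by
  have hn := hμ.summable_mul_of_norm_le_one (fun g => (norm_intChar φ u g).le)
  have hs := hn.of_norm.hasSum
  have hsc : HasSum (fun g => (μ g : ℂ) * (starRingEnd ℂ) (intChar φ u g))
      ((starRingEnd ℂ) (∑' g, (μ g : ℂ) * intChar φ u g)) := by
    have := (Complex.hasSum_conj'.mpr (by simpa using hs) :
      HasSum (fun g => (starRingEnd ℂ) ((μ g : ℂ) * intChar φ u g)) _)
    simpa using this
  have hnc : Summable (fun g => ‖(μ g : ℂ) * (starRingEnd ℂ) (intChar φ u g)‖) :=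
    hμ.summable_mul_of_norm_le_one (fun g => by
      rw [Complex.norm_conj]; exact (norm_intChar φ u g).le)
  have h := hasSum_mul_prod hs hsc hn hnc
  rw [Complex.mul_conj] at h
  simp only [charDefect, sub_sub_cancel]
  refine hasSum_of_eq h (fun p => ?_) rfl
  rw [intChar_diffHom]
  push_cast
  ring

theorem hasSum_noised_mul_char {μ : G → ℝ} (hμ : IsProb μ) (φ : G →* Multiplicative ℤ)
    (ρ u : ℝ) :
    HasSum (fun p : G × G => (noised μ ρ p : ℂ) * intChar (diffHom φ) u p)
      ((1 - ρ * charDefect φ μ u : ℝ) : ℂ) := by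
  have h1 := (hasSum_prod_mul_char hμ φ u).mul_left (ρ : ℂ)
  have h2 : HasSum (fun p : G × G => if p.1 = p.2 then (μ p.1 : ℂ) else 0) 1 := by
    refine hasSum_diag (f := fun p : G × G => (μ p.1 : ℂ)) ?_
    simpa using Complex.hasSum_ofReal.mpr hμ.2
  refine hasSum_of_eq (h1.add (h2.mul_left ((1 - ρ : ℝ) : ℂ))) (fun p => ?_) ?_
  · have h3 : p.1 = p.2 → intChar (diffHom φ) u p = 1 := fun h => by
      simp [intChar, toAdd_diffHom, h]
    simp only [noised]
    split_ifs with h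
    · rw [h3 h]
      push_cast
      ring
    · push_cast
      ring
  · push_cast
    ring

theorem hasSum_convPow_noised_mul_cos {μ : G → ℝ} (hμ : IsProb μ) (φ : G →* Multiplicative ℤ)
    {ρ : ℝ} (h0 : 0 ≤ ρ) (h1 : ρ ≤ 1) (u : ℝ) (n : ℕ) :
    HasSum (fun p : G × G => convPow (noised μ ρ) n p *
        Real.cos (u * ((Multiplicative.toAdd (diffHom φ p) : ℤ) : ℝ)))
      ((1 - ρ * charDefect φ μ u) ^ n) := by
  have h := hasSum_convPow_mul_char (hμ.noised h0 h1) (intChar (diffHom φ) u)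
    (norm_intChar _ u) (hasSum_noised_mul_char hμ φ ρ u) n
  have h' := Complex.hasSum_re h
  rw [← Complex.ofReal_pow, Complex.ofReal_re] at h'
  simpa only [Complex.re_ofReal_mul, intChar_re] using h'

theorem hasSum_charDefect {μ : G → ℝ} (hμ : IsProb μ) (φ : G →* Multiplicative ℤ) (u : ℝ) :
    HasSum (fun p : G × G => μ p.1 * μ p.2 *
        (1 - Real.cos (u * ((Multiplicative.toAdd (diffHom φ p) : ℤ) : ℝ))))
      (charDefect φ μ u) := by
  have h' := Complex.hasSum_re (hasSum_prod_mul_char hμ φ u)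
  simp only [Complex.re_ofReal_mul, intChar_re, Complex.ofReal_re] at h'
  refine hasSum_of_eq (hμ.hasSum_prod.sub h') (fun p => ?_) ?_
  · ring
  · ring

theorem charDefect_nonneg {μ : G → ℝ} (hμ : IsProb μ) (φ : G →* Multiplicative ℤ) (u : ℝ) :
    0 ≤ charDefect φ μ u :=
  (hasSum_charDefect hμ φ u).nonneg fun _ =>
    mul_nonneg (mul_nonneg (hμ.1 _) (hμ.1 _)) (sub_nonneg.mpr (Real.cos_le_one _))

theorem charDefect_le_one (φ : G →* Multiplicative ℤ) (μ : G → ℝ) (u : ℝ) :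
    charDefect φ μ u ≤ 1 :=
  sub_le_self _ (Complex.normSq_nonneg _)

theorem charDefect_le {μ : G → ℝ} (hμ : IsProb μ) (φ : G →* Multiplicative ℤ)
    (hφ : Summable (fun g => ((Multiplicative.toAdd (φ g) : ℤ) : ℝ) ^ 2 * μ g)) (u : ℝ) :
    charDefect φ μ u ≤ 2 * (∑' g, ((Multiplicative.toAdd (φ g) : ℤ) : ℝ) ^ 2 * μ g) * u ^ 2 := by
  have hnn : ∀ g, 0 ≤ ((Multiplicative.toAdd (φ g) : ℤ) : ℝ) ^ 2 * μ g :=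
    fun g => mul_nonneg (sq_nonneg _) (hμ.1 g)
  have hA := hφ.hasSum.mul hμ.2 (hφ.mul_of_nonneg hμ.2.summable hnn hμ.1)
  have hB := hμ.2.mul hφ.hasSum (hμ.2.summable.mul_of_nonneg hφ hμ.1 hnn)
  refine (hasSum_le (fun p => ?_) (hasSum_charDefect hμ φ u)
    ((hA.add hB).mul_left (u ^ 2))).trans_eq (by ring)
  rw [toAdd_diffHom]
  push_cast
  set a : ℝ := ((Multiplicative.toAdd (φ p.1) : ℤ) : ℝ)
  set b : ℝ := ((Multiplicative.toAdd (φ p.2) : ℤ) : ℝ)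
  have h1 : 1 - Real.cos (u * (a - b)) ≤ (u * (a - b)) ^ 2 / 2 := by
    linarith [Real.one_sub_sq_div_two_le_cos (x := u * (a - b))]
  have h2 : (u * (a - b)) ^ 2 / 2 ≤ u ^ 2 * (a ^ 2 + b ^ 2) := by
    nlinarith [sq_nonneg (u * (a + b))]
  calc μ p.1 * μ p.2 * (1 - Real.cos (u * (a - b)))
      ≤ μ p.1 * μ p.2 * (u ^ 2 * (a ^ 2 + b ^ 2)) :=
        mul_le_mul_of_nonneg_left (h1.trans h2) (mul_nonneg (hμ.1 _) (hμ.1 _))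
    _ = _ := by ring

theorem exists_le_charDefect {μ : G → ℝ} (hμ : IsProb μ) (φ : G →* Multiplicative ℤ) {x y : G}
    (hx : 0 < μ x) (hy : 0 < μ y) (hxy : φ x ≠ φ y) :
    ∃ c > 0, ∃ r > 0, ∀ u : ℝ, |u| ≤ r → c * u ^ 2 ≤ charDefect φ μ u := by
  set d : ℝ := ((Multiplicative.toAdd (diffHom φ (x, y)) : ℤ) : ℝ) with hd
  have hd0 : d ≠ 0 := by
    rw [hd, toAdd_diffHom]
    exact_mod_cast sub_ne_zero.mpr fun h => hxy (Multiplicative.toAdd.injective h)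
  have hd' : 0 < |d| := abs_pos.mpr hd0
  refine ⟨μ x * μ y * (2 / Real.pi ^ 2 * d ^ 2), by positivity, Real.pi / |d|, by positivity,
    fun u hu => ?_⟩
  have h1 : |u * d| ≤ Real.pi := by
    rw [abs_mul]
    exact (le_div_iff₀ hd').mp hu
  have h2 := Real.cos_le_one_sub_mul_cos_sq h1
  have h3 := le_hasSum (hasSum_charDefect hμ φ u) (x, y) fun _ _ =>
    mul_nonneg (mul_nonneg (hμ.1 _) (hμ.1 _)) (sub_nonneg.mpr (Real.cos_le_one _))
  refine le_trans ?_ h3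
  rw [← hd]
  calc μ x * μ y * (2 / Real.pi ^ 2 * d ^ 2) * u ^ 2
      = μ x * μ y * (2 / Real.pi ^ 2 * (u * d) ^ 2) := by ring
    _ ≤ _ := mul_le_mul_of_nonneg_left (by linarith) (by positivity)

end CharacterSums

section WordLength

variable {G : Type*} [Group G]

theorem exists_list_length_eq_wordLength {S₀ : Finset G} (hsymm : ∀ s ∈ S₀, s⁻¹ ∈ S₀)
    (hgen : Subgroup.closure (S₀ : Set G) = ⊤) (g : G) :
    ∃ l : List G, (∀ s ∈ l, s ∈ S₀) ∧ l.length = wordLength S₀ g ∧ l.prod = g := by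
  have hg : g ∈ Subgroup.closure (S₀ : Set G) := hgen ▸ Subgroup.mem_top g
  rw [← Subgroup.mem_toSubmonoid, Subgroup.closure_toSubmonoid] at hg
  obtain ⟨l, hl, hprod⟩ := Submonoid.exists_list_of_mem_closure hg
  have hne : {n : ℕ | ∃ l : List G, (∀ s ∈ l, s ∈ S₀) ∧ l.length = n ∧ l.prod = g}.Nonempty :=
    ⟨l.length, l, fun s hs => (hl s hs).elim id fun h => by simpa using hsymm _ h, rfl, hprod⟩
  exact Nat.sInf_mem hne

theorem exists_abs_hom_le_wordLength (φ : G →* Multiplicative ℤ) {S₀ : Finset G}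
    (hsymm : ∀ s ∈ S₀, s⁻¹ ∈ S₀) (hgen : Subgroup.closure (S₀ : Set G) = ⊤) :
    ∃ C : ℝ, ∀ g, |((Multiplicative.toAdd (φ g) : ℤ) : ℝ)| ≤ C * wordLength S₀ g := by
  refine ⟨∑ s ∈ S₀, |((Multiplicative.toAdd (φ s) : ℤ) : ℝ)|, fun g => ?_⟩
  obtain ⟨l, hl, hlen, rfl⟩ := exists_list_length_eq_wordLength hsymm hgen g
  rw [← hlen]
  clear hlen
  induction l with
  | nil => simp
  | cons a l ih =>
    have ha := Finset.single_le_sum (f := fun s => |((Multiplicative.toAdd (φ s) : ℤ) : ℝ)|)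
      (fun s _ => abs_nonneg _) (hl a (by simp))
    have ih := ih fun s hs => hl s (by simp [hs])
    simp only [List.prod_cons, map_mul, toAdd_mul, List.length_cons] at ih ⊢
    push_cast at ih ⊢
    refine (abs_add_le _ _).trans ?_
    linarith

theorem FinSecondMoment.summable_hom_sq {μ : G → ℝ} (hμ : IsProb μ) (hmom : FinSecondMoment μ)
    (φ : G →* Multiplicative ℤ) :
    Summable (fun g => ((Multiplicative.toAdd (φ g) : ℤ) : ℝ) ^ 2 * μ g) := by
  obtain ⟨S₀, hsymm, hgen, hs⟩ := hmom
  obtain ⟨C, hC⟩ := exists_abs_hom_le_wordLength φ hsymm hgen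
  refine Summable.of_nonneg_of_le (fun g => mul_nonneg (sq_nonneg _) (hμ.1 g)) (fun g => ?_)
    (hs.mul_left (C ^ 2))
  rw [← mul_assoc, ← mul_pow]
  refine mul_le_mul_of_nonneg_right ?_ (hμ.1 g)
  rw [← sq_abs]
  exact pow_le_pow_left₀ (abs_nonneg _) (hC g) 2

theorem Nondeg.exists_hom_ne {μ : G → ℝ} (hnd : Nondeg μ) {φ : G →* Multiplicative ℤ}
    (hφ : ∃ γ, φ γ ≠ 1) : ∃ x y, 0 < μ x ∧ 0 < μ y ∧ φ x ≠ φ y := by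
  by_contra! hcon
  have closed (P : ℤ → Prop) (hadd : ∀ a b, P a → P b → P (a + b))
      (hP : ∀ x, 0 < μ x → P (Multiplicative.toAdd (φ x))) (g : G) :
      P (Multiplicative.toAdd (φ g)) := by
    induction hnd g using Subsemigroup.closure_induction with
    | mem x hx => exact hP x hx
    | mul x y _ _ ihx ihy =>
      rw [map_mul, toAdd_mul]
      exact hadd _ _ ihx ihy
  obtain ⟨x, hx⟩ : ∃ x, 0 < μ x := by
    by_contra! h
    have := closed (fun _ => False) (fun _ _ h _ => h) (fun x hx => absurd hx (h x).not_gt) 1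
    exact this
  have hc (y : G) (hy : 0 < μ y) : Multiplicative.toAdd (φ y) = Multiplicative.toAdd (φ x) := by
    rw [hcon y x hy hx]
  rcases lt_trichotomy (Multiplicative.toAdd (φ x)) 0 with h | h | h
  · have := closed (· < 0) (fun _ _ => add_neg) (fun y hy => by rw [hc y hy]; exact h) 1
    simp at this
  · obtain ⟨γ, hγ⟩ := hφ
    have := closed (· = 0) (fun a b ha hb => by rw [ha, hb, add_zero])
      (fun y hy => by rw [hc y hy]; exact h) γ
    exact hγ (Multiplicative.toAdd.injective this)
  · have := closed (0 < ·) (fun _ _ => add_pos) (fun y hy => by rw [hc y hy]; exact h) 1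
    simp at this

end WordLength

section TotalVariation

variable {Z : Type*}

theorem tv_nonneg (p q : Z → ℝ) : 0 ≤ tv p q :=
  mul_nonneg (by norm_num) (tsum_nonneg fun _ => abs_nonneg _)

theorem tv_le_one {p q : Z → ℝ} (hp : IsProb p) (hq : IsProb q) : tv p q ≤ 1 := by
  have h : ∀ z, |p z - q z| ≤ p z + q z := fun z => by
    rw [abs_le]
    constructor <;> linarith [hp.1 z, hq.1 z]
  have hs := hp.2.add hq.2
  have := hasSum_le h (hs.summable.of_nonneg_of_le (fun _ => abs_nonneg _) h).hasSum hs
  simp only [tv]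
  linarith

theorem sub_le_tv {p q f : Z → ℝ} (hp : IsProb p) (hq : IsProb q) (h0 : ∀ z, 0 ≤ f z)
    (h1 : ∀ z, f z ≤ 1) {a b : ℝ} (ha : HasSum (fun z => p z * f z) a)
    (hb : HasSum (fun z => q z * f z) b) : a - b ≤ tv p q := by
  have hs : Summable (fun z => |p z - q z|) := (hp.2.sub hq.2).summable.abs
  have h := (ha.sub hb).sub ((hp.2.sub hq.2).mul_left (1 / 2))
  have := hasSum_le (fun z => ?_) h (hs.hasSum.mul_left (1 / 2))
  · simpa [tv] using this
  · have h2 : |f z - 1 / 2| ≤ 1 / 2 := abs_le.mpr ⟨by linarith [h0 z], by linarith [h1 z]⟩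
    calc p z * f z - q z * f z - 1 / 2 * (p z - q z) = (p z - q z) * (f z - 1 / 2) := by ring
      _ ≤ |p z - q z| * |f z - 1 / 2| := by rw [← abs_mul]; exact le_abs_self _
      _ ≤ |p z - q z| * (1 / 2) := mul_le_mul_of_nonneg_left h2 (abs_nonneg _)
      _ = _ := by ring

end TotalVariation

/-- The normalized Fejér kernel `K⁻² ∑_{j,l<K} cos((j-l)θ) = |K⁻¹ ∑_{j<K} e^{ijθ}|²`. -/
def fejer (K : ℕ) (θ : ℝ) : ℝ :=
  ((K : ℝ) ^ 2)⁻¹ * ∑ j ∈ Finset.range K, ∑ l ∈ Finset.range K, Real.cos (((j : ℝ) - l) * θ)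

theorem fejer_nonneg (K : ℕ) (θ : ℝ) : 0 ≤ fejer K θ := by
  refine mul_nonneg (by positivity) ?_
  have : ∑ j ∈ Finset.range K, ∑ l ∈ Finset.range K, Real.cos (((j : ℝ) - l) * θ) =
      (∑ j ∈ Finset.range K, Real.cos (j * θ)) ^ 2 +
        (∑ j ∈ Finset.range K, Real.sin (j * θ)) ^ 2 := by
    rw [sq, sq, Finset.sum_mul_sum, Finset.sum_mul_sum, ← Finset.sum_add_distrib]
    refine Finset.sum_congr rfl fun j _ => ?_
    rw [← Finset.sum_add_distrib]
    refine Finset.sum_congr rfl fun l _ => ?_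
    rw [sub_mul, Real.cos_sub]
  rw [this]
  positivity

theorem fejer_le_one (K : ℕ) (θ : ℝ) : fejer K θ ≤ 1 := by
  have h : ∑ j ∈ Finset.range K, ∑ l ∈ Finset.range K, Real.cos (((j : ℝ) - l) * θ) ≤
      (K : ℝ) ^ 2 := by
    calc _ ≤ ∑ j ∈ Finset.range K, ∑ l ∈ Finset.range K, (1 : ℝ) :=
          Finset.sum_le_sum fun _ _ => Finset.sum_le_sum fun _ _ => Real.cos_le_one _
      _ = (K : ℝ) ^ 2 := by simp [sq]
  exact (mul_le_mul_of_nonneg_left h (by positivity)).trans (inv_mul_le_one)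

section NoisedWalk

variable {G : Type*} [Group G]

/-- The expectation of `fejer K (u·(φ(γ) − φ(γ')))` under the `n`-step noised walk. -/
def fejerMean (φ : G →* Multiplicative ℤ) (μ : G → ℝ) (K n : ℕ) (ρ u : ℝ) : ℝ :=
  ((K : ℝ) ^ 2)⁻¹ * ∑ j ∈ Finset.range K, ∑ l ∈ Finset.range K,
    (1 - ρ * charDefect φ μ (((j : ℝ) - l) * u)) ^ n

theorem hasSum_fejerMean {μ : G → ℝ} (hμ : IsProb μ) (φ : G →* Multiplicative ℤ) (K n : ℕ)
    {ρ : ℝ} (h0 : 0 ≤ ρ) (h1 : ρ ≤ 1) (u : ℝ) :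
    HasSum (fun p : G × G => convPow (noised μ ρ) n p *
        fejer K (u * ((Multiplicative.toAdd (diffHom φ p) : ℤ) : ℝ)))
      (fejerMean φ μ K n ρ u) := by
  have h := (hasSum_sum fun j (_ : j ∈ Finset.range K) =>
    hasSum_sum fun l (_ : l ∈ Finset.range K) =>
      hasSum_convPow_noised_mul_cos hμ φ h0 h1 (((j : ℝ) - l) * u) n).mul_left ((K : ℝ) ^ 2)⁻¹
  refine hasSum_of_eq h (fun p => ?_) rfl
  simp only [fejer, ← Finset.mul_sum, mul_assoc]
  ring

theorem tv_ge_fejerMean_sub {μ : G → ℝ} (hμ : IsProb μ) (φ : G →* Multiplicative ℤ) (K n : ℕ)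
    {ρ : ℝ} (h0 : 0 ≤ ρ) (h1 : ρ ≤ 1) (u : ℝ) :
    fejerMean φ μ K n ρ u - fejerMean φ μ K n 1 u ≤
      tv (convPow (noised μ ρ) n) (fun p : G × G => convPow μ n p.1 * convPow μ n p.2) := by
  rw [← convPow_prod hμ, ← noised_one]
  exact sub_le_tv ((hμ.noised h0 h1).convPow n) ((hμ.noised zero_le_one le_rfl).convPow n)
    (fun _ => fejer_nonneg K _) (fun _ => fejer_le_one K _)
    (hasSum_fejerMean hμ φ K n h0 h1 u) (hasSum_fejerMean hμ φ K n zero_le_one le_rfl u)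

theorem abs_natCast_sub_le {K j l : ℕ} (hj : j ∈ Finset.range K) (hl : l ∈ Finset.range K) :
    |(j : ℝ) - l| ≤ K := by
  have hj : (j : ℝ) ≤ K := by exact_mod_cast (Finset.mem_range.mp hj).le
  have hl : (l : ℝ) ≤ K := by exact_mod_cast (Finset.mem_range.mp hl).le
  rw [abs_le]
  constructor <;> linarith [Nat.cast_nonneg (α := ℝ) j, Nat.cast_nonneg (α := ℝ) l]

theorem le_fejerMean {μ : G → ℝ} (hμ : IsProb μ) (φ : G →* Multiplicative ℤ) {M : ℝ}
    (hM0 : 0 ≤ M) (hM : ∀ u, charDefect φ μ u ≤ M * u ^ 2) {K : ℕ} (hK : 0 < K) (n : ℕ)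
    {ρ : ℝ} (h0 : 0 ≤ ρ) (h1 : ρ ≤ 1) (u : ℝ) :
    1 - n * (ρ * (M * (K * u) ^ 2)) ≤ fejerMean φ μ K n ρ u := by
  have hterm : ∀ j ∈ Finset.range K, ∀ l ∈ Finset.range K,
      1 - n * (ρ * (M * (K * u) ^ 2)) ≤ (1 - ρ * charDefect φ μ (((j : ℝ) - l) * u)) ^ n := by
    intro j hj l hl
    set b := charDefect φ μ (((j : ℝ) - l) * u) with hb
    have hb0 : 0 ≤ b := charDefect_nonneg hμ φ _
    have hb1 : ρ * b ≤ 1 := mul_le_one₀ h1 hb0 (charDefect_le_one φ μ _)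
    have hbM : b ≤ M * (K * u) ^ 2 := by
      refine (hM _).trans (mul_le_mul_of_nonneg_left ?_ hM0)
      rw [mul_pow, mul_pow, ← sq_abs ((j : ℝ) - l)]
      have := pow_le_pow_left₀ (abs_nonneg _) (abs_natCast_sub_le hj hl) 2
      exact mul_le_mul_of_nonneg_right this (sq_nonneg u)
    have hbern := one_add_mul_le_pow (a := -(ρ * b)) (by linarith) n
    have : (n : ℝ) * (ρ * b) ≤ n * (ρ * (M * (K * u) ^ 2)) := by gcongr
    rw [← sub_eq_add_neg] at hbern
    linarith
  have hK' : (0 : ℝ) < K := by exact_mod_cast hK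
  rw [fejerMean, inv_mul_eq_div, le_div_iff₀ (by positivity)]
  calc (1 - n * (ρ * (M * (K * u) ^ 2))) * (K : ℝ) ^ 2
      = ∑ j ∈ Finset.range K, ∑ l ∈ Finset.range K, (1 - n * (ρ * (M * (K * u) ^ 2))) := by
        simp only [Finset.sum_const, Finset.card_range, nsmul_eq_mul]
        ring
    _ ≤ _ := Finset.sum_le_sum fun j hj => Finset.sum_le_sum fun l hl => hterm j hj l hl

theorem fejerMean_one_le {μ : G → ℝ} (hμ : IsProb μ) (φ : G →* Multiplicative ℤ) {c r : ℝ}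
    (hc : 0 < c) (hr : ∀ u : ℝ, |u| ≤ r → c * u ^ 2 ≤ charDefect φ μ u) {K : ℕ} (hK : 0 < K)
    (n : ℕ) {u : ℝ} (hu : K * |u| ≤ r) :
    fejerMean φ μ K n 1 u ≤ 1 / K + Real.exp (-(n * (c * u ^ 2))) := by
  have hterm : ∀ j ∈ Finset.range K, ∀ l ∈ Finset.range K,
      (1 - 1 * charDefect φ μ (((j : ℝ) - l) * u)) ^ n ≤
        (if j = l then 1 else 0) + Real.exp (-(n * (c * u ^ 2))) := by
    intro j hj l hl
    have hnn : 0 ≤ 1 - charDefect φ μ (((j : ℝ) - l) * u) :=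
      sub_nonneg.mpr (charDefect_le_one φ μ _)
    rw [one_mul]
    split_ifs with hjl
    · have := pow_le_one₀ (n := n) hnn (by linarith [charDefect_nonneg hμ φ (((j : ℝ) - l) * u)])
      linarith [Real.exp_pos (-(n * (c * u ^ 2)))]
    · have hle : |((j : ℝ) - l) * u| ≤ r := by
        rw [abs_mul]
        exact (mul_le_mul_of_nonneg_right (abs_natCast_sub_le hj hl) (abs_nonneg u)).trans hu
      have hone : 1 ≤ ((j : ℝ) - l) ^ 2 := by
        have : ((j : ℤ) - l) ≠ 0 := sub_ne_zero.mpr (by exact_mod_cast hjl)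
        have := Int.one_le_abs this
        rw [one_le_sq_iff_one_le_abs]
        exact_mod_cast this
      have hlow : c * u ^ 2 ≤ charDefect φ μ (((j : ℝ) - l) * u) := by
        refine le_trans ?_ (hr _ hle)
        rw [mul_pow]
        exact mul_le_mul_of_nonneg_left (le_mul_of_one_le_left (sq_nonneg u) hone) hc.le
      have hexp : 1 - charDefect φ μ (((j : ℝ) - l) * u) ≤ Real.exp (-(c * u ^ 2)) := by
        linarith [Real.add_one_le_exp (-(c * u ^ 2))]
      refine (pow_le_pow_left₀ hnn hexp n).trans_eq ?_
      rw [← Real.exp_nat_mul, zero_add, mul_neg]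
  have hK' : (0 : ℝ) < K := by exact_mod_cast hK
  rw [fejerMean, inv_mul_eq_div, div_le_iff₀ (by positivity)]
  calc _ ≤ ∑ j ∈ Finset.range K, ∑ l ∈ Finset.range K,
        ((if j = l then 1 else 0) + Real.exp (-(n * (c * u ^ 2)))) :=
        Finset.sum_le_sum fun j hj => Finset.sum_le_sum fun l hl => hterm j hj l hl
    _ = (1 / K + Real.exp (-(n * (c * u ^ 2)))) * (K : ℝ) ^ 2 := by
        simp only [Finset.sum_add_distrib, Finset.sum_ite_eq, Finset.sum_const,
          Finset.card_range, nsmul_eq_mul, ← Finset.sum_filter, Finset.filter_mem_eq_inter,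
          Finset.inter_self]
        field_simp

theorem eventually_le_tv {μ : G → ℝ} (hμ : IsProb μ) (hmom : FinSecondMoment μ)
    (hnd : Nondeg μ) {φ : G →* Multiplicative ℤ} (hφ : ∃ γ, φ γ ≠ 1) {ε : ℝ} (hε : 0 < ε) :
    ∃ δ > 0, ∀ ρ, 0 ≤ ρ → ρ ≤ 1 → ρ < δ → ∀ᶠ n : ℕ in atTop, 1 - ε ≤
      tv (convPow (noised μ ρ) n) (fun p : G × G => convPow μ n p.1 * convPow μ n p.2) := by
  obtain ⟨x, y, hx, hy, hxy⟩ := hnd.exists_hom_ne hφ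
  obtain ⟨c, hc, r, hr, hlow⟩ := exists_le_charDefect hμ φ hx hy hxy
  have hup := charDefect_le hμ φ (hmom.summable_hom_sq hμ φ)
  set M := 2 * ∑' g, ((Multiplicative.toAdd (φ g) : ℤ) : ℝ) ^ 2 * μ g
  have hM0 : 0 ≤ M :=
    mul_nonneg zero_le_two (tsum_nonneg fun g => mul_nonneg (sq_nonneg _) (hμ.1 g))
  obtain ⟨k, hk⟩ := exists_nat_one_div_lt (show 0 < ε / 3 by positivity)
  set K : ℕ := k + 1 with hKdef
  have hK : 0 < K := k.succ_pos
  have hK1 : 1 / (K : ℝ) < ε / 3 := by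
    rw [hKdef]
    push_cast
    exact hk
  obtain ⟨T, hT0, hT⟩ : ∃ T : ℝ, 0 < T ∧ Real.exp (-(c * T)) < ε / 3 := by
    have h : Tendsto (fun T : ℝ => Real.exp (-(c * T))) atTop (nhds 0) :=
      Real.tendsto_exp_neg_atTop_nhds_zero.comp (tendsto_id.const_mul_atTop hc)
    exact ((eventually_gt_atTop 0).and
      (h.eventually (gt_mem_nhds (show 0 < ε / 3 by positivity)))).exists
  set A := M * (K ^ 2 * T) with hA
  have hA0 : 0 ≤ A := by positivity
  refine ⟨ε / 3 / (A + 1), by positivity, fun ρ h0 h1 hρ => ?_⟩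
  have hsmall : ρ * A ≤ ε / 3 := by
    rw [lt_div_iff₀ (by positivity)] at hρ
    linarith
  have hev : ∀ᶠ n : ℕ in atTop, K * |Real.sqrt (T / n)| ≤ r := by
    have h : Tendsto (fun n : ℕ => K * |Real.sqrt (T / n)|) atTop (nhds 0) := by
      have h1 := (Real.continuous_sqrt.tendsto 0).comp (tendsto_const_div_atTop_nhds_zero_nat T)
      rw [Real.sqrt_zero] at h1
      simpa using h1.abs.const_mul (K : ℝ)
    exact (h.eventually (gt_mem_nhds hr)).mono fun n hn => hn.le
  filter_upwards [hev, eventually_gt_atTop 0] with n hn hn0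
  have hn0' : (0 : ℝ) < n := by exact_mod_cast hn0
  have hsq : Real.sqrt (T / n) ^ 2 = T / n := Real.sq_sqrt (by positivity)
  have hnT : (n : ℝ) * (T / n) = T := by field_simp
  have e1 := le_fejerMean hμ φ hM0 hup hK n h0 h1 (Real.sqrt (T / n))
  have e2 := fejerMean_one_le hμ φ hc hlow hK n hn
  have e3 := tv_ge_fejerMean_sub hμ φ K n h0 h1 (Real.sqrt (T / n))
  have e4 : (n : ℝ) * (ρ * (M * (K * Real.sqrt (T / n)) ^ 2)) = ρ * A := by
    rw [mul_pow, hsq, hA]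
    linear_combination (ρ * M * (K : ℝ) ^ 2) * hnT
  have e5 : (n : ℝ) * (c * Real.sqrt (T / n) ^ 2) = c * T := by
    rw [hsq]
    linear_combination c * hnT
  rw [e4] at e1
  rw [e5] at e2
  linarith

end NoisedWalk

end

/-- If `Γ` admits a nonzero homomorphism onto `ℤ`, then
`lim_{ρ→0} liminf_n ‖π^ρ_n − μ_n×μ_n‖_TV = 1`; in particular the `μ`-random walk is
not noise sensitive in total variation. -/
theorem not_noise_sensitive_of_nonzero_hom_to_int
    {Γ : Type*} [Group Γ] [Countable Γ] (hFG : Group.FG Γ) (hVA : VirtAbelian Γ)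
    (μ : Γ → ℝ) (hμ : IsProb μ) (hmom : FinSecondMoment μ) (hnd : Nondeg μ)
    (hhom : ∃ φ : Γ →* Multiplicative ℤ, ∃ γ : Γ, φ γ ≠ 1) :
    Tendsto (fun ρ : ℝ =>
        Filter.liminf (fun n : ℕ => tv (convPow (noised μ ρ) n)
            (fun p : Γ × Γ => convPow μ n p.1 * convPow μ n p.2)) atTop)
      (nhdsWithin 0 (Set.Ioc (0 : ℝ) 1)) (nhds 1) ∧
    ¬ (∀ ρ : ℝ, 0 < ρ → ρ ≤ 1 →
        Tendsto (fun n : ℕ => tv (convPow (noised μ ρ) n)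
            (fun p : Γ × Γ => convPow μ n p.1 * convPow μ n p.2))
          atTop (nhds 0)) := by
  obtain ⟨φ, hφ⟩ := hhom
  have hlim : Tendsto (fun ρ : ℝ =>
        Filter.liminf (fun n : ℕ => tv (convPow (noised μ ρ) n)
            (fun p : Γ × Γ => convPow μ n p.1 * convPow μ n p.2)) atTop)
      (nhdsWithin 0 (Set.Ioc (0 : ℝ) 1)) (nhds 1) := by
    rw [Metric.tendsto_nhds]
    intro ε hε
    obtain ⟨δ, hδ, h⟩ := eventually_le_tv hμ hmom hnd hφ (half_pos hε)
    filter_upwards [self_mem_nhdsWithin, nhdsWithin_le_nhds (gt_mem_nhds hδ)] with ρ hρ hρδ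
    have hle (n : ℕ) : tv (convPow (noised μ ρ) n)
        (fun p : Γ × Γ => convPow μ n p.1 * convPow μ n p.2) ≤ 1 := by
      rw [← convPow_prod hμ, ← noised_one]
      exact tv_le_one ((hμ.noised hρ.1.le hρ.2).convPow n)
        ((hμ.noised zero_le_one le_rfl).convPow n)
    have hlow := le_liminf_of_le
      (IsCoboundedUnder.of_frequently_le (f := atTop) (Eventually.of_forall hle).frequently)
      (h ρ hρ.1.le hρ.2 hρδ)
    have hup := liminf_le_of_frequently_le (f := atTop) (Eventually.of_forall hle).frequently
      (isBoundedUnder_of ⟨0, fun n => tv_nonneg _ _⟩)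
    rw [Real.dist_eq, abs_lt]
    constructor <;> linarith
  refine ⟨hlim, fun hzero => ?_⟩
  have hne : (nhdsWithin (0 : ℝ) (Set.Ioc 0 1)).NeBot := by
    rw [nhdsWithin_Ioc_eq_nhdsGT zero_lt_one]
    infer_instance
  have h0 := hlim.congr' (f₂ := fun _ => (0 : ℝ)) <| by
    filter_upwards [self_mem_nhdsWithin] with ρ hρ
    exact (hzero ρ hρ.1 hρ.2).liminf_eq
  exact zero_ne_one (tendsto_nhds_unique tendsto_const_nhds h0)

end NSVA
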